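/- arXiv:1503.05175 — 2 statements merged into one kernel-verified Lean document; each statement's English description precedes it below -/
import Mathlib

section
/- Let T be a c.e.m.p.t. on a σ-finite measure space (X,𝒜,μ), and let Y∈𝒜 with 0<μ(Y)<∞. Then for every measurable E⊆Y with μ(E)>0 and all integers m,n≥1, one has μ_E(φ_E > m·n) ≤ (μ(Y)/μ(E))·( 1/m + m·μ_Y(φ_Y > n) ). -/
/-!
The usual argument bounds `φ_E` by means of the induced map `T_Y`: if `φ_E > m n` on `E`, then
either one of the points `x, T_Y x, …, T_Y^{m-1} x` lies in `A = Y ∩ {φ_Y > n}`, or the first `m`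
returns to `Y` all happen up to time `m n` while the orbit avoids `E`. The first event has measure
at most `m μ(A)` because `T_Y` preserves `μ|_Y`, the second at most `μ(Y) / m` by Kac's formula.

Here the induced map is never constructed. Both bounds come from one finite packing estimate
(`sum_measure_inter_le`): if no point of `S k'` is mapped by `T^(k'-k)` into `S k` for `k < k'`,
then the sets `T^{-(K-k)} (S k ∩ T^{-k} A)`, `k ≤ K`, are disjoint subsets of `T^{-K} A`, whence
`∑ μ (S k ∩ T^{-k} A) ≤ μ A`.
* `S k = {x ∈ Y : x visits Y exactly j times in [0, k)}` gives the bound `μ(A)` for `T_Y^j x ∈ A`.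
* `S k = G`, with `G ⊆ E ∩ {φ_E > m n}` the points with at least `m` visits to `Y` during
  `[0, m n]`, gives `m μ(G) ≤ ∑ μ (G ∩ T^{-k} Y) ≤ μ(Y)`.
-/

open MeasureTheory Filter Set Topology ENNReal

noncomputable section

/-- First entrance/return time of `E` under `T`, valued in `ℝ≥0∞` (`∞` if the
forward orbit never enters `E`). -/
def phiRT {X : Type*} (T : X → X) (E : Set X) (x : X) : ℝ≥0∞ :=
  ⨅ n ∈ {n : ℕ | 0 < n ∧ T^[n] x ∈ E}, (n : ℝ≥0∞)

/-- Conditional (sub)probability `μ_E(A) = μ(E∩A)/μ(E)`, as a real number. -/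
def condProb {X : Type*} [MeasurableSpace X] (μ : Measure X) (E A : Set X) : ℝ :=
  (μ (E ∩ A) / μ E).toReal

/-- Conservative ergodic measure preserving transformation. -/
def CEMPT {X : Type*} [MeasurableSpace X] (T : X → X) (μ : Measure X) : Prop :=
  Conservative T μ ∧ Ergodic T μ

/-- Membership in the class ℱ of sub-probability distribution functions on `[0,∞)`. -/
def MemF (F : ℝ → ℝ) : Prop :=
  (∀ ⦃s t : ℝ⦄, 0 ≤ s → s ≤ t → F s ≤ F t) ∧
  (∀ t, 0 ≤ t → F t ∈ Set.Icc (0 : ℝ) 1) ∧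
  (∀ t, 0 ≤ t → ContinuousWithinAt F (Set.Ici t) t)

/-- Vague convergence `Fₙ ⇒ F` of sub-distribution functions on `[0,∞)`:
convergence at every continuity point of `F` in `[0,∞)`. -/
def VagueConv (Fn : ℕ → ℝ → ℝ) (F : ℝ → ℝ) : Prop :=
  ∀ t, 0 ≤ t → ContinuousWithinAt F (Set.Ici 0) t →
    Tendsto (fun n => Fn n t) atTop (𝓝 (F t))

/-- A scaling function: a homeomorphism of `[0,∞)`. -/
def IsScalingFunction (γ : ℝ → ℝ) : Prop :=
  γ 0 = 0 ∧ StrictMonoOn γ (Set.Ici 0) ∧ ContinuousOn γ (Set.Ici 0) ∧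
  (∀ x, 0 ≤ x → 0 ≤ γ x) ∧ (∀ y, 0 ≤ y → ∃ x, 0 ≤ x ∧ γ x = y)

/-- Regular variation of index `α` at infinity. -/
def RegVary (a : ℝ → ℝ) (α : ℝ) : Prop :=
  ∀ c : ℝ, 0 < c → Tendsto (fun t => a (c * t) / a t) atTop (𝓝 (c ^ α))

/-- The transfer operator iterate `T̂^k 1_Y` (unnormalized): the Radon–Nikodym
derivative w.r.t. `μ` of the pushforward under `T^k` of `μ` restricted to `Y`. -/
def dkDens {X : Type*} [MeasurableSpace X] (T : X → X) (μ : Measure X) (Y : Set X)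
    (k : ℕ) : X → ℝ≥0∞ :=
  (Measure.map (T^[k]) (μ.restrict Y)).rnDeriv μ

/-- `Y` is a Darling–Kac set with return sequence `n ↦ a n`:
`(1/aₙ) Σ_{k<n} T̂^k (1_Y/μ(Y)) → 1` uniformly (mod μ) on `Y`. -/
def IsDKSet {X : Type*} [MeasurableSpace X] (T : X → X) (μ : Measure X) (Y : Set X)
    (a : ℝ → ℝ) : Prop :=
  MeasurableSet Y ∧ 0 < μ Y ∧ μ Y < ∞ ∧
  ∀ ε : ℝ, 0 < ε → ∃ N : ℕ, ∀ n ≥ N,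
    ∀ᵐ x ∂μ.restrict Y,
      |(∑ k ∈ Finset.range n, (dkDens T μ Y k x).toReal) / (μ Y).toReal / a n - 1| ≤ ε

/-- Normalized return/hitting distribution function: the distribution, under `μ_A`,
of `γ(μ(E))·φ_E` evaluated at `t`. -/
def nrmDF {X : Type*} [MeasurableSpace X] (μ : Measure X) (T : X → X) (γ : ℝ → ℝ)
    (A E : Set X) (t : ℝ) : ℝ :=
  condProb μ A {x | ENNReal.ofReal (γ (μ E).toReal) * phiRT T E x ≤ ENNReal.ofReal t}

open Classical in
/-- Number of visits of the orbit of `x` to `Y` during the time interval `[0, k)`. -/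
def visits {X : Type*} (T : X → X) (Y : Set X) (x : X) (k : ℕ) : ℕ :=
  Nat.count (fun i => T^[i] x ∈ Y) k

lemma visits_succ {X : Type*} (T : X → X) (Y : Set X) (x : X) (k : ℕ) :
    visits T Y x (k + 1) = visits T Y x k + (T^[k] ⁻¹' Y).indicator 1 x := by
  classical
  unfold visits
  rw [Nat.count_succ]
  simp [Set.indicator_apply]

lemma visits_add {X : Type*} (T : X → X) (Y : Set X) (x : X) (a b : ℕ) :
    visits T Y x (a + b) = visits T Y x a + visits T Y (T^[a] x) b := by
  classical
  unfold visits
  rw [Nat.count_add]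
  congr 2
  funext i
  rw [← Function.iterate_add_apply, add_comm]

lemma visits_mono {X : Type*} (T : X → X) (Y : Set X) (x : X) {a b : ℕ} (h : a ≤ b) :
    visits T Y x a ≤ visits T Y x b := by
  obtain ⟨c, rfl⟩ := Nat.exists_eq_add_of_le h
  rw [visits_add]
  omega

lemma visits_one {X : Type*} (T : X → X) (Y : Set X) {x : X} (hx : x ∈ Y) :
    visits T Y x 1 = 1 := by
  have := visits_succ T Y x 0
  simpa [visits, hx] using this

/-- Up to its first return to `Y`, a point of `Y` has visited `Y` only at time `0`. -/
lemma visits_eq_one {X : Type*} (T : X → X) (Y : Set X) {x : X} (hx : x ∈ Y) (d : ℕ)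
    (hd : ∀ i, 0 < i → i < d + 1 → T^[i] x ∉ Y) : visits T Y x (d + 1) = 1 := by
  induction d with
  | zero => exact visits_one T Y hx
  | succ d ih =>
    rw [visits_succ, ih fun i h0 h1 => hd i h0 (by omega)]
    have := hd (d + 1) (by omega) (by omega)
    rw [Set.indicator_of_notMem (by simpa using this), add_zero]

lemma measurable_visits {X : Type*} [MeasurableSpace X] {T : X → X} (hT : Measurable T)
    {Y : Set X} (hY : MeasurableSet Y) (k : ℕ) : Measurable fun x => visits T Y x k := by
  induction k with
  | zero => simp [visits]
  | succ k ih =>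
    simp only [visits_succ]
    exact ih.add (measurable_one.indicator ((hT.iterate k) hY))

lemma visits_eq_sum {X : Type*} (T : X → X) (Y : Set X) (x : X) (k : ℕ) :
    (visits T Y x k : ℝ≥0∞) = ∑ i ∈ Finset.range k, (T^[i] ⁻¹' Y).indicator 1 x := by
  induction k with
  | zero => simp [visits]
  | succ k ih =>
    rw [visits_succ, Finset.sum_range_succ, ← ih]
    by_cases h : x ∈ T^[k] ⁻¹' Y <;> simp [h]

lemma lt_phiRT_iff {X : Type*} (T : X → X) (E : Set X) (x : X) (N : ℕ) :
    (N : ℝ≥0∞) < phiRT T E x ↔ ∀ k, 0 < k → k ≤ N → T^[k] x ∉ E := by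
  constructor
  · intro h k h0 hk hE
    have h1 : phiRT T E x ≤ (k : ℝ≥0∞) := iInf₂_le k ⟨h0, hE⟩
    have h2 : (N : ℝ≥0∞) < k := h.trans_le h1
    have h3 : N < k := by exact_mod_cast h2
    omega
  · intro h
    have h1 : ((N + 1 : ℕ) : ℝ≥0∞) ≤ phiRT T E x := by
      refine le_iInf₂ fun k hk => ?_
      have : N + 1 ≤ k := by
        by_contra hlt
        exact h k hk.1 (by omega) hk.2
      exact_mod_cast this
    refine lt_of_lt_of_le ?_ h1
    exact_mod_cast Nat.lt_succ_self N

lemma measurableSet_lt_phiRT {X : Type*} [MeasurableSpace X] {T : X → X} (hT : Measurable T)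
    {E : Set X} (hE : MeasurableSet E) (N : ℕ) :
    MeasurableSet {x | (N : ℝ≥0∞) < phiRT T E x} := by
  have : {x | (N : ℝ≥0∞) < phiRT T E x} =
      ⋂ k : ℕ, ⋂ _ : 0 < k, ⋂ _ : k ≤ N, (T^[k] ⁻¹' E)ᶜ := by
    ext x
    simp [lt_phiRT_iff]
  rw [this]
  exact .iInter fun k => .iInter fun _ => .iInter fun _ => ((hT.iterate k) hE).compl

/-- Packing estimate: the sets `T^{-(K-k)} (S k ∩ T^{-k} A)`, `k ≤ K`, are disjoint subsets of
`T^{-K} A`, and each has the measure of `S k ∩ T^{-k} A`. -/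
lemma sum_measure_inter_le {X : Type*} [MeasurableSpace X] {μ : Measure X} {T : X → X}
    (hT : MeasurePreserving T μ μ) (S : ℕ → Set X) (hS : ∀ k, MeasurableSet (S k))
    {A : Set X} (hA : MeasurableSet A) (K : ℕ)
    (hdisj : ∀ k d, 0 < d → k + d ≤ K → ∀ y ∈ S (k + d), T^[d] y ∉ S k) :
    ∑ k ∈ Finset.range (K + 1), μ (S k ∩ T^[k] ⁻¹' A) ≤ μ A := by
  have hm : ∀ k, MeasurableSet (S k ∩ T^[k] ⁻¹' A) := fun k =>
    (hS k).inter ((hT.measurable.iterate k) hA)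
  have key : ∀ k k', k < k' → k' ≤ K → Disjoint (T^[K - k] ⁻¹' (S k ∩ T^[k] ⁻¹' A))
      (T^[K - k'] ⁻¹' (S k' ∩ T^[k'] ⁻¹' A)) := by
    intro k k' hlt hK
    rw [Set.disjoint_left]
    rintro z ⟨h1, -⟩ ⟨h2, -⟩
    obtain ⟨d, rfl⟩ := Nat.exists_eq_add_of_le hlt.le
    refine hdisj k d (by omega) hK _ h2 ?_
    rw [← Function.iterate_add_apply]
    convert h1 using 2
    omega
  calc ∑ k ∈ Finset.range (K + 1), μ (S k ∩ T^[k] ⁻¹' A)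
      = ∑ k ∈ Finset.range (K + 1), μ (T^[K - k] ⁻¹' (S k ∩ T^[k] ⁻¹' A)) :=
        Finset.sum_congr rfl fun k _ =>
          ((hT.iterate (K - k)).measure_preimage (hm k).nullMeasurableSet).symm
    _ = μ (⋃ k ∈ Finset.range (K + 1), T^[K - k] ⁻¹' (S k ∩ T^[k] ⁻¹' A)) := by
        refine (measure_biUnion_finset ?_ fun k _ => (hT.measurable.iterate (K - k)) (hm k)).symm
        intro k hk k' hk' hne
        simp only [Finset.coe_range, Set.mem_Iio] at hk hk'
        rcases lt_or_gt_of_ne hne with h | h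
        · exact key k k' h (by omega)
        · exact (key k' k h (by omega)).symm
    _ ≤ μ (T^[K] ⁻¹' A) := by
        refine measure_mono (Set.iUnion₂_subset fun k hk z hz => ?_)
        have h2 : T^[k] (T^[K - k] z) ∈ A := hz.2
        rw [Finset.mem_range] at hk
        rwa [← Function.iterate_add_apply, show k + (K - k) = K by omega] at h2
    _ = μ A := (hT.iterate K).measure_preimage hA.nullMeasurableSet

/-- If none of the first `m` points of `Y` visited up to time `m n` has return time greater than
`n`, then for `j ≤ m` visit number `j` (counted from `0`) takes place no later than time `j n`. -/
lemma exists_visit {X : Type*} (T : X → X) (Y : Set X) {x : X} (hx : x ∈ Y) (m n : ℕ)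
    (hgood : ∀ j < m, ∀ k ≤ m * n, visits T Y x k = j →
      T^[k] x ∉ Y ∩ {y | (n : ℝ≥0∞) < phiRT T Y y}) :
    ∀ j ≤ m, ∃ k ≤ j * n, T^[k] x ∈ Y ∧ visits T Y x k = j := by
  classical
  intro j
  induction j with
  | zero => exact fun _ => ⟨0, by simp, by simpa using hx, by simp [visits]⟩
  | succ j ih =>
    intro hj
    obtain ⟨k, hk, hkY, hv⟩ := ih (by omega)
    have h1 := hgood j (by omega) k (hk.trans (Nat.mul_le_mul_right n (by omega))) hv
    have h2 : ¬ (n : ℝ≥0∞) < phiRT T Y (T^[k] x) := fun h => h1 ⟨hkY, h⟩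
    rw [lt_phiRT_iff] at h2
    push Not at h2
    obtain ⟨e, he0, hen, heY⟩ := h2
    have hex : ∃ d, T^[d + 1] (T^[k] x) ∈ Y := ⟨e - 1, by rwa [Nat.sub_add_cancel he0]⟩
    set d := Nat.find hex with hd
    have hdY : T^[d + 1] (T^[k] x) ∈ Y := Nat.find_spec hex
    have hde : d ≤ e - 1 := Nat.find_min' hex (by rwa [Nat.sub_add_cancel he0])
    refine ⟨k + (d + 1), ?_, ?_, ?_⟩
    · rw [Nat.succ_mul]
      omega
    · rwa [add_comm, Function.iterate_add_apply]
    · rw [visits_add, hv, visits_eq_one T Y hkY]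
      intro i h0 hi hiY
      exact Nat.find_min hex (m := i - 1) (by omega) (by rwa [Nat.sub_add_cancel h0])

/-- The points of `Y` whose visit number `j` to `Y` up to time `K` falls into `A` form a set of
measure at most `μ A`; this replaces the invariance of `μ|_Y` under the induced map. -/
lemma measure_visit_le {X : Type*} [MeasurableSpace X] {μ : Measure X} {T : X → X}
    (hT : MeasurePreserving T μ μ) {Y : Set X} (hY : MeasurableSet Y)
    {A : Set X} (hA : MeasurableSet A) (j K : ℕ) :
    μ (⋃ k ∈ Finset.range (K + 1), (Y ∩ {x | visits T Y x k = j}) ∩ T^[k] ⁻¹' A) ≤ μ A := by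
  refine (measure_biUnion_finset_le _ _).trans
    (sum_measure_inter_le hT (fun k => Y ∩ {x | visits T Y x k = j}) (fun k => hY.inter
      (measurable_visits hT.measurable hY k (measurableSet_singleton j))) hA K ?_)
  rintro k d hd - y ⟨hy, hyj⟩ ⟨-, hyj'⟩
  simp only [Set.mem_ofPred_eq] at hyj hyj'
  rw [add_comm, visits_add, hyj'] at hyj
  have h1 := visits_mono T Y y (show 1 ≤ d by omega)
  rw [visits_one T Y hy] at h1
  omega

/-- The Kac-type bound: points of `E` that visit `Y` at least `m` times up to time `K`, without
returning to `E`, have total measure at most `μ Y / m`. -/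
lemma mul_measure_le {X : Type*} [MeasurableSpace X] {μ : Measure X} {T : X → X}
    (hT : MeasurePreserving T μ μ) {Y E : Set X} (hY : MeasurableSet Y) (hE : MeasurableSet E)
    (m K : ℕ) :
    m * μ (E ∩ {x | (K : ℝ≥0∞) < phiRT T E x} ∩ {x | m ≤ visits T Y x (K + 1)}) ≤ μ Y := by
  set G := E ∩ {x | (K : ℝ≥0∞) < phiRT T E x} ∩ {x | m ≤ visits T Y x (K + 1)} with hG
  have hGm : MeasurableSet G := (hE.inter (measurableSet_lt_phiRT hT.measurable hE K)).inter
    (measurable_visits hT.measurable hY (K + 1) measurableSet_Ici)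
  have hYk : ∀ k, MeasurableSet (T^[k] ⁻¹' Y) := fun k => (hT.measurable.iterate k) hY
  calc (m : ℝ≥0∞) * μ G = ∫⁻ _ in G, (m : ℝ≥0∞) ∂μ := by simp
    _ ≤ ∫⁻ x in G, (visits T Y x (K + 1) : ℝ≥0∞) ∂μ := by
        refine setLIntegral_mono' hGm fun x hx => ?_
        exact_mod_cast hx.2
    _ = ∑ k ∈ Finset.range (K + 1), μ (G ∩ T^[k] ⁻¹' Y) := by
        simp only [visits_eq_sum]
        rw [lintegral_finsetSum _ fun k _ => measurable_one.indicator (hYk k)]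
        refine Finset.sum_congr rfl fun k _ => ?_
        rw [lintegral_indicator_one (hYk k), Measure.restrict_apply (hYk k), Set.inter_comm]
    _ ≤ μ Y := by
        refine sum_measure_inter_le hT (fun _ => G) (fun _ => hGm) hY K ?_
        rintro k d hd hk y hy hy'
        exact (lt_phiRT_iff T E y K).1 hy.1.2 d hd (by omega) hy'.1.1

/-- For `E ⊆ Y` of positive measure and integers `m, n ≥ 1`:
`μ_E(φ_E > m·n) ≤ (μ(Y)/μ(E))·(1/m + m·μ_Y(φ_Y > n))`. -/
theorem stmt2 {X : Type*} [MeasurableSpace X] (μ : Measure X) [SigmaFinite μ]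
    (T : X → X) (hT : CEMPT T μ)
    (Y : Set X) (hY : MeasurableSet Y) (hY0 : 0 < μ Y) (hY1 : μ Y < ∞)
    (E : Set X) (hEY : E ⊆ Y) (hEm : MeasurableSet E) (hE0 : 0 < μ E)
    (m n : ℕ) (hm : 1 ≤ m) (hn : 1 ≤ n) :
    condProb μ E {x | ((m * n : ℕ) : ℝ≥0∞) < phiRT T E x} ≤
      (μ Y).toReal / (μ E).toReal *
        (1 / (m : ℝ) + (m : ℝ) * condProb μ Y {x | (n : ℝ≥0∞) < phiRT T Y x}) := by
  have hP : MeasurePreserving T μ μ := hT.2.toMeasurePreserving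
  unfold condProb
  set B := E ∩ {x | ((m * n : ℕ) : ℝ≥0∞) < phiRT T E x} with hB
  set A := Y ∩ {x | (n : ℝ≥0∞) < phiRT T Y x} with hA
  set G := B ∩ {x | m ≤ visits T Y x (m * n + 1)} with hG
  have hAm : MeasurableSet A := hY.inter (measurableSet_lt_phiRT hP.measurable hY n)
  have hA1 : μ A ≠ ∞ := ((measure_mono Set.inter_subset_left).trans_lt hY1).ne
  have hGY : m * μ G ≤ μ Y := mul_measure_le hP hY hEm m (m * n)
  have hBE : B ⊆ Y := Set.inter_subset_left.trans hEY
  have hB1 : μ B ≠ ∞ := ((measure_mono hBE).trans_lt hY1).ne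
  have hG1 : μ G ≠ ∞ := ((measure_mono (Set.inter_subset_left.trans hBE)).trans_lt hY1).ne
  have hcover : B ⊆ G ∪ ⋃ j ∈ Finset.range m, ⋃ k ∈ Finset.range (m * n + 1),
      (Y ∩ {x | visits T Y x k = j}) ∩ T^[k] ⁻¹' A := by
    intro x hx
    by_cases hbad : ∃ j < m, ∃ k ≤ m * n, visits T Y x k = j ∧ T^[k] x ∈ A
    · obtain ⟨j, hj, k, hk, hv, hkA⟩ := hbad
      refine Or.inr (Set.mem_biUnion (Finset.mem_range.2 hj)
        (Set.mem_biUnion (Finset.mem_range.2 (by omega : k < m * n + 1)) ?_))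
      exact ⟨⟨hBE hx, hv⟩, hkA⟩
    · push Not at hbad
      obtain ⟨k, hk, -, hv⟩ := exists_visit T Y (hBE hx) m n hbad m le_rfl
      refine Or.inl ⟨hx, ?_⟩
      have h1 := visits_mono T Y x (show k ≤ m * n + 1 by omega)
      rwa [hv] at h1
  have hmain : μ B ≤ μ G + m * μ A := by
    refine (measure_mono hcover).trans ((measure_union_le _ _).trans ?_)
    gcongr
    refine (measure_biUnion_finset_le _ _).trans ?_
    refine (Finset.sum_le_sum fun j _ => measure_visit_le hP hY hAm j (m * n)).trans ?_
    simp
  have hmain' : (μ B).toReal ≤ (μ G).toReal + m * (μ A).toReal := by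
    have h2 : (m : ℝ≥0∞) * μ A ≠ ∞ := ENNReal.mul_ne_top (by simp) hA1
    have := ENNReal.toReal_mono (ENNReal.add_ne_top.2 ⟨hG1, h2⟩) hmain
    rwa [ENNReal.toReal_add hG1 h2, ENNReal.toReal_mul, ENNReal.toReal_natCast] at this
  have hGY' : (m : ℝ) * (μ G).toReal ≤ (μ Y).toReal := by
    have := ENNReal.toReal_mono hY1.ne hGY
    rwa [ENNReal.toReal_mul, ENNReal.toReal_natCast] at this
  have hm0 : (0 : ℝ) < m := by exact_mod_cast hm
  have hYpos : 0 < (μ Y).toReal := ENNReal.toReal_pos hY0.ne' hY1.ne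
  have hG2 : (μ G).toReal ≤ (μ Y).toReal / m := by
    rw [le_div_iff₀ hm0]
    linarith
  rw [ENNReal.toReal_div, ENNReal.toReal_div]
  calc (μ B).toReal / (μ E).toReal
      ≤ ((μ Y).toReal / m + m * (μ A).toReal) / (μ E).toReal := by
        gcongr
        linarith
    _ = _ := by
        field_simp
end
end

section
/- Let T be a c.e.m.p.t. on a σ-finite measure space (X,𝒜,μ) with μ(X)=∞, and let γ:[0,∞)→[0,∞) be a scaling function. Then there exists Y∈𝒜 with 0<μ(Y)<∞ such that the family {law_{μ_E}[γ(μ(E))·φ_E] : E∈Y∩𝒜, μ(E)>0} is not tight; indeed there exist sets E_k∈𝒜 with μ(E_k)>0, μ(E_k)→0, and γ(μ(E_k))·φ_{E_k} ≥ k everywhere on E_k, for all k≥1. -/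
/-!
Fix `A` with `0 < μ A < ∞` and let `Bₙ` (`firstHit`) be the set of points entering `A` for the
first time at time `n ≥ 0`. Since `T⁻¹ Bₙ = Bₙ₊₁ ⊔ (A ∩ T⁻¹ Bₙ)`, the numbers `μ Bₙ` decrease.
They sum to `∞`, because almost every orbit enters `A` and `μ X = ∞`, and they tend to `0`,
because the losses `μ (A ∩ T⁻¹ Bₙ)` add up to `μ A = μ B₀`.

A finite union `E` of sets `B_M, B_{M+N}, B_{M+2N}, …` with `M ≥ N` has all its return times at
least `N`: after `j < N` steps from such a set the entrance time has dropped by `j`, which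
changes its residue modulo `N`. Starting at an `M` with `μ B_M ≤ a`, the measure of the union
grows in steps of size at most `a` to infinity, so it can be stopped in `[a, 2a]`
(`exists_set_long_return`).

With `a = 2⁻ᵏ⁻¹` and `N ≥ k / γ(a)` this produces `E_k` with `μ E_k ≤ 2⁻ᵏ` and
`γ(μ E_k) φ_{E_k} ≥ k` on `E_k`. Then `Y = ⋃ E_k` has finite measure, and the sets `E_k ⊆ Y`
contradict tightness.
-/

open MeasureTheory Filter Set Topology ENNReal

noncomputable section

/-- The points whose orbit, started at time `0`, enters `A` for the first time at time `n`. -/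
def firstHit {X : Type*} (T : X → X) (A : Set X) (n : ℕ) : Set X :=
  {x | T^[n] x ∈ A ∧ ∀ j < n, T^[j] x ∉ A}

lemma firstHit_zero {X : Type*} (T : X → X) (A : Set X) : firstHit T A 0 = A := by
  ext x; simp [firstHit]

lemma firstHit_unique {X : Type*} {T : X → X} {A : Set X} {m n : ℕ} {x : X}
    (hm : x ∈ firstHit T A m) (hn : x ∈ firstHit T A n) : m = n := by
  rcases lt_trichotomy m n with h | h | h
  · exact absurd hm.1 (hn.2 m h)
  · exact h
  · exact absurd hn.1 (hm.2 n h)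

lemma firstHit_iterate {X : Type*} {T : X → X} {A : Set X} {j n : ℕ} {x : X}
    (hx : x ∈ firstHit T A (n + j)) : T^[j] x ∈ firstHit T A n := by
  refine ⟨?_, fun i hi => ?_⟩
  · rw [← Function.iterate_add_apply]; exact hx.1
  · rw [← Function.iterate_add_apply]; exact hx.2 _ (by omega)

lemma measurableSet_firstHit {X : Type*} [MeasurableSpace X] {T : X → X} (hT : Measurable T)
    {A : Set X} (hA : MeasurableSet A) (n : ℕ) : MeasurableSet (firstHit T A n) := by
  have : firstHit T A n = T^[n] ⁻¹' A ∩ ⋂ j ∈ Finset.range n, (T^[j] ⁻¹' A)ᶜ := by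
    ext x; simp [firstHit]
  rw [this]
  exact ((hT.iterate n) hA).inter
    (Finset.measurableSet_biInter _ fun j _ => ((hT.iterate j) hA).compl)

/-- Pulling back a first-hit set splits it into the next first-hit set and the part of `A`
returning to `A` at time exactly `n + 1`. -/
lemma preimage_firstHit {X : Type*} (T : X → X) (A : Set X) (n : ℕ) :
    T ⁻¹' firstHit T A n = firstHit T A (n + 1) ∪ (A ∩ T ⁻¹' firstHit T A n) := by
  ext x
  constructor
  · intro h
    by_cases hx : x ∈ A
    · exact Or.inr ⟨hx, h⟩
    · refine Or.inl ⟨h.1, fun j hj => ?_⟩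
      cases j with
      | zero => exact hx
      | succ j => exact h.2 j (by omega)
  · rintro (h | h)
    · exact firstHit_iterate (j := 1) h
    · exact h.2

lemma measure_firstHit_succ {X : Type*} [MeasurableSpace X] {μ : Measure X} {T : X → X}
    (hT : MeasurePreserving T μ μ) {A : Set X} (hA : MeasurableSet A) (n : ℕ) :
    μ (firstHit T A n) = μ (firstHit T A (n + 1)) + μ (A ∩ T ⁻¹' firstHit T A n) := by
  have hB := measurableSet_firstHit hT.measurable hA n
  rw [← hT.measure_preimage hB.nullMeasurableSet]
  conv_lhs => rw [preimage_firstHit]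
  refine measure_union ?_ (hA.inter (hT.measurable hB))
  rw [Set.disjoint_left]
  rintro x hx ⟨hxA, -⟩
  exact hx.2 0 (by omega) hxA

lemma antitone_measure_firstHit {X : Type*} [MeasurableSpace X] {μ : Measure X} {T : X → X}
    (hT : MeasurePreserving T μ μ) {A : Set X} (hA : MeasurableSet A) :
    Antitone fun n => μ (firstHit T A n) :=
  antitone_nat_of_succ_le fun n => by
    rw [measure_firstHit_succ hT hA n]; exact le_self_add

/-- By recurrence, almost every orbit visits a set of positive measure infinitely often. -/
lemma ae_frequently_mem {X : Type*} [MeasurableSpace X] {μ : Measure X} {T : X → X}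
    (hT : CEMPT T μ) {A : Set X} (hA : MeasurableSet A) (hpos : 0 < μ A) :
    ∀ᵐ x ∂μ, ∃ᶠ n in atTop, T^[n] x ∈ A := by
  obtain ⟨hc, he⟩ := hT
  set L : Set X := {x | ∃ᶠ n in atTop, T^[n] x ∈ A} with hL
  have hLmeas : MeasurableSet L := by
    have : L = limsup (fun n => T^[n] ⁻¹' A) atTop := by
      ext x; rw [mem_limsup_iff_frequently_mem]; rfl
    rw [this]
    exact MeasurableSet.measurableSet_limsup fun n => (he.measurable.iterate n) hA
  have hLinv : T ⁻¹' L = L := by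
    ext x
    change (∃ᶠ n in atTop, T^[n + 1] x ∈ A) ↔ ∃ᶠ n in atTop, T^[n] x ∈ A
    conv_rhs => rw [← map_add_atTop_eq_nat 1, frequently_map]
  have hAL : ∀ᵐ x ∂μ, x ∈ A → x ∈ L :=
    hc.ae_mem_imp_frequently_image_mem hA.nullMeasurableSet
  have hLpos : 0 < μ L := hpos.trans_le (measure_mono_ae hAL)
  rcases he.ae_empty_or_univ hLmeas hLinv with h | h
  · rw [ae_eq_empty] at h; exact absurd h hLpos.ne'
  · rw [ae_eq_univ] at h; exact h

lemma exists_mem_firstHit {X : Type*} {T : X → X} {A : Set X} {x : X} {n : ℕ}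
    (h : T^[n] x ∈ A) : ∃ m ≤ n, x ∈ firstHit T A m := by
  classical
  have hex : ∃ n, T^[n] x ∈ A := ⟨n, h⟩
  exact ⟨Nat.find hex, Nat.find_min' hex h, Nat.find_spec hex, fun j hj => Nat.find_min hex hj⟩

lemma measure_le_tsum_firstHit {X : Type*} [MeasurableSpace X] {μ : Measure X} {T : X → X}
    (hT : CEMPT T μ) {A : Set X} (hA : MeasurableSet A) (hpos : 0 < μ A) :
    μ univ ≤ ∑' n, μ (firstHit T A n) := by
  refine le_trans (measure_mono_ae ?_) (measure_iUnion_le _)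
  filter_upwards [ae_frequently_mem hT hA hpos] with x hx _
  obtain ⟨n, hn⟩ := hx.exists
  obtain ⟨m, -, hm⟩ := exists_mem_firstHit hn
  exact mem_iUnion.2 ⟨m, hm⟩

/-- The losses `μ (A ∩ T⁻¹ Bₙ)` in passing from `μ Bₙ` to `μ Bₙ₊₁` add up to `μ A = μ B₀`,
as almost every point of `A` returns to `A`; hence nothing is left in the limit. -/
lemma tendsto_measure_firstHit {X : Type*} [MeasurableSpace X] {μ : Measure X} {T : X → X}
    (hT : CEMPT T μ) {A : Set X} (hA : MeasurableSet A) (hpos : 0 < μ A) (hfin : μ A < ∞) :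
    Tendsto (fun n => μ (firstHit T A n)) atTop (𝓝 0) := by
  have hmp := hT.2.toMeasurePreserving
  set c : ℕ → ℝ≥0∞ := fun n => μ (A ∩ T ⁻¹' firstHit T A n) with hc
  have hsum : ∀ n, μ A = μ (firstHit T A n) + ∑ i ∈ Finset.range n, c i := by
    intro n
    induction n with
    | zero => simp [firstHit_zero]
    | succ n ih =>
      rw [ih, measure_firstHit_succ hmp hA n, Finset.sum_range_succ]
      simp only [hc]; ring
  have hc_ge : μ A ≤ ∑' n, c n := by
    refine le_trans (measure_mono_ae ?_) (measure_iUnion_le _)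
    filter_upwards [ae_frequently_mem hT hA hpos] with x hx hxA
    obtain ⟨n, hn1, hn⟩ := (frequently_atTop.1 hx) 1
    obtain ⟨n, rfl⟩ : ∃ k, n = k + 1 := ⟨n - 1, by omega⟩
    obtain ⟨m, -, hm⟩ := exists_mem_firstHit (T := T) (x := T x) (n := n) hn
    exact mem_iUnion.2 ⟨m, hxA, hm⟩
  have hc_fin : ∀ n, ∑ i ∈ Finset.range n, c i ≤ μ A := fun n => by
    conv_rhs => rw [hsum n]
    exact le_add_self
  have hc_eq : ∑' n, c n = μ A := le_antisymm (ENNReal.tsum_le_of_sum_range_le hc_fin) hc_ge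
  have hlim : Tendsto (fun n => ∑ i ∈ Finset.range n, c i) atTop (𝓝 (μ A)) :=
    hc_eq ▸ ENNReal.tendsto_nat_tsum c
  have hb : ∀ n, μ (firstHit T A n) = μ A - ∑ i ∈ Finset.range n, c i := fun n =>
    ENNReal.eq_sub_of_add_eq ((hc_fin n).trans_lt hfin).ne (hsum n).symm
  simp only [hb]
  simpa using ENNReal.Tendsto.sub tendsto_const_nhds hlim (Or.inl hfin.ne)

/-- Sampling a non-summable antitone sequence along an arithmetic progression starting at an
index where it is at most `a`, some partial sum lies in `[a, 2a]`. -/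
lemma exists_sampled_sum {b : ℕ → ℝ≥0∞} (hb : Antitone b) (hb0 : b 0 < ∞) (hsum : ∑' n, b n = ∞)
    {a : ℝ≥0∞} (ha : 0 < a) (hatop : a < ∞) {M N : ℕ} (hN : 1 ≤ N) (hM : b M ≤ a) :
    ∃ K : ℕ, a ≤ ∑ m ∈ Finset.range K, b (M + m * N) ∧
      ∑ m ∈ Finset.range K, b (M + m * N) ≤ 2 * a := by
  classical
  have hex : ∃ K : ℕ, a ≤ ∑ m ∈ Finset.range K, b (M + m * N) := by
    by_contra! hcon
    have hblock : ∀ K, ∑ i ∈ Finset.range (M + K * N), b i ≤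
        M * b 0 + N * ∑ m ∈ Finset.range K, b (M + m * N) := by
      intro K
      induction K with
      | zero =>
        simpa using Finset.sum_le_card_nsmul (Finset.range M) b (b 0) fun i _ => hb (Nat.zero_le i)
      | succ K ih =>
        have h1 : M + (K + 1) * N = (M + K * N) + N := by ring
        rw [h1, Finset.sum_range_add, Finset.sum_range_succ _ K, mul_add, ← add_assoc]
        refine add_le_add ih ?_
        simpa using Finset.sum_le_card_nsmul (Finset.range N) (fun i => b (M + K * N + i))
          (b (M + K * N)) fun i _ => hb (Nat.le_add_right _ i)
    have hle : ∑' n, b n ≤ M * b 0 + N * a := by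
      refine ENNReal.tsum_le_of_sum_range_le fun n => ?_
      have hn : n ≤ M + n * N := by nlinarith
      calc ∑ i ∈ Finset.range n, b i ≤ ∑ i ∈ Finset.range (M + n * N), b i :=
            Finset.sum_le_sum_of_subset (Finset.range_mono hn)
        _ ≤ _ := hblock n
        _ ≤ _ := by gcongr; exact (hcon n).le
    rw [hsum, top_le_iff] at hle
    exact ENNReal.add_ne_top.2 ⟨ENNReal.mul_ne_top (by simp) hb0.ne,
      ENNReal.mul_ne_top (by simp) hatop.ne⟩ hle
  refine ⟨Nat.find hex, Nat.find_spec hex, ?_⟩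
  obtain ⟨K, hK⟩ : ∃ K, Nat.find hex = K + 1 := by
    refine Nat.exists_eq_succ_of_ne_zero fun h0 => ?_
    have := Nat.find_spec hex
    rw [h0] at this
    simp at this
    exact ha.ne' this
  have hlt : ∑ m ∈ Finset.range K, b (M + m * N) < a :=
    not_le.1 (Nat.find_min hex (by omega))
  rw [hK, Finset.sum_range_succ, two_mul]
  exact add_le_add hlt.le ((hb (Nat.le_add_right _ _)).trans hM)

/-- Sets of prescribed size (up to a factor `2`) all of whose return times are at least `N`. -/
lemma exists_set_long_return {X : Type*} [MeasurableSpace X] {μ : Measure X} [SigmaFinite μ]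
    {T : X → X} (hT : CEMPT T μ) (hInf : μ univ = ∞) {a : ℝ≥0∞} (ha : 0 < a) (hatop : a < ∞)
    {N : ℕ} (hN : 1 ≤ N) :
    ∃ E : Set X, MeasurableSet E ∧ a ≤ μ E ∧ μ E ≤ 2 * a ∧
      ∀ x ∈ E, (N : ℝ≥0∞) ≤ phiRT T E x := by
  have hmp := hT.2.toMeasurePreserving
  obtain ⟨A, hA, -, hpos, hfin⟩ := Measure.exists_subset_measure_lt_top (μ := μ)
    MeasurableSet.univ (r := 0) (by rw [hInf]; exact ENNReal.zero_lt_top)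
  have hmeas := measurableSet_firstHit hmp.measurable hA
  -- `M ≥ N` ensures that times `M + m * N - j` with `j < N` are genuine entrance times.
  obtain ⟨M, hM, hNM⟩ := (((tendsto_measure_firstHit hT hA hpos hfin).eventually_le_const ha).and
    (eventually_ge_atTop N)).exists
  obtain ⟨K, hK1, hK2⟩ := exists_sampled_sum (antitone_measure_firstHit hmp hA)
    (by rw [firstHit_zero]; exact hfin)
    (top_le_iff.1 (hInf ▸ measure_le_tsum_firstHit hT hA hpos)) ha hatop hN hM
  have hE : μ (⋃ m ∈ Finset.range K, firstHit T A (M + m * N)) =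
      ∑ m ∈ Finset.range K, μ (firstHit T A (M + m * N)) := by
    refine measure_biUnion_finset (fun i _ j _ hij => ?_) fun m _ => hmeas _
    refine Set.disjoint_left.2 fun x hi hj => hij ?_
    have := firstHit_unique hi hj
    exact Nat.eq_of_mul_eq_mul_right hN (by omega)
  refine ⟨⋃ m ∈ Finset.range K, firstHit T A (M + m * N),
    Finset.measurableSet_biUnion _ fun m _ => hmeas _, hE ▸ hK1, hE ▸ hK2, fun x hx => ?_⟩
  refine le_iInf₂ fun n hn => ?_
  obtain ⟨hn0, hn⟩ := hn
  by_contra! hlt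
  have hlt : n < N := by exact_mod_cast hlt
  simp only [mem_iUnion] at hx hn
  obtain ⟨m, -, hm⟩ := hx
  obtain ⟨m', -, hm'⟩ := hn
  rw [show M + m * N = (M + m * N - n) + n by omega] at hm
  have h := firstHit_unique (firstHit_iterate hm) hm'
  -- Equality would force `N ∣ n`, impossible for `0 < n < N`.
  have h2 : m * N = m' * N + n := by omega
  have h3 : N ∣ n := (Nat.dvd_add_right (Dvd.intro_left m' rfl)).1 (h2 ▸ Dvd.intro_left m rfl)
  exact absurd (Nat.le_of_dvd hn0 h3) (by omega)

/-- No universal scale: for any scaling function γ there is a set `Y` of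
positive finite measure inside which the family of laws of `γ(μ(E))·φ_E` is not tight;
indeed there are sets `E_k` with `μ(E_k) → 0` and `γ(μ(E_k))·φ_{E_k} ≥ k` on `E_k`. -/
theorem stmt4 {X : Type*} [MeasurableSpace X] (μ : Measure X) [SigmaFinite μ]
    (T : X → X) (hT : CEMPT T μ) (hInf : μ Set.univ = ∞)
    (γ : ℝ → ℝ) (hγ : IsScalingFunction γ) :
    ∃ Y : Set X, MeasurableSet Y ∧ 0 < μ Y ∧ μ Y < ∞ ∧
      (¬ ∀ ε : ℝ, 0 < ε → ∃ t : ℝ, ∀ E : Set X, E ⊆ Y → MeasurableSet E → 0 < μ E →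
          condProb μ E {x | ENNReal.ofReal t <
            ENNReal.ofReal (γ (μ E).toReal) * phiRT T E x} ≤ ε) ∧
      ∃ E : ℕ → Set X, (∀ k, MeasurableSet (E k) ∧ 0 < μ (E k)) ∧
        Tendsto (fun k => μ (E k)) atTop (𝓝 0) ∧
        ∀ k : ℕ, 1 ≤ k → ∀ x ∈ E k,
          (k : ℝ≥0∞) ≤ ENNReal.ofReal (γ (μ (E k)).toReal) * phiRT T (E k) x := by
  obtain ⟨hγ0, hγmono, -, -, -⟩ := hγ
  have key : ∀ k : ℕ, ∃ E : Set X, MeasurableSet E ∧ 0 < μ E ∧ μ E ≤ 2⁻¹ ^ k ∧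
      ∀ x ∈ E, (k : ℝ≥0∞) ≤ ENNReal.ofReal (γ (μ E).toReal) * phiRT T E x := by
    intro k
    set a : ℝ≥0∞ := 2⁻¹ ^ (k + 1) with ha_def
    have ha : 0 < a := ENNReal.pow_pos (by simp) _
    have hatop : a < ∞ := ENNReal.pow_lt_top (by simp)
    have h2a : 2 * a = 2⁻¹ ^ k := by
      rw [ha_def, pow_succ', ← mul_assoc, ENNReal.mul_inv_cancel (by simp) (by simp), one_mul]
    have haR : 0 < a.toReal := ENNReal.toReal_pos ha.ne' hatop.ne
    have hγa : 0 < γ a.toReal := by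
      have := hγmono (mem_Ici.2 le_rfl) (mem_Ici.2 haR.le) haR
      rwa [hγ0] at this
    obtain ⟨N, hN⟩ := exists_nat_ge ((k : ℝ) / γ a.toReal)
    obtain ⟨E, hE, hE1, hE2, hE3⟩ :=
      exists_set_long_return hT hInf ha hatop (N := N + 1) (by omega)
    refine ⟨E, hE, ha.trans_le hE1, h2a ▸ hE2, fun x hx => ?_⟩
    have hEtop : μ E ≠ ∞ := (hE2.trans_lt (ENNReal.mul_lt_top (by simp) hatop)).ne
    have hγle : γ a.toReal ≤ γ (μ E).toReal :=
      hγmono.monotoneOn haR.le ENNReal.toReal_nonneg (ENNReal.toReal_mono hEtop hE1)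
    have hreal : (k : ℝ) ≤ γ a.toReal * ((N + 1 : ℕ) : ℝ) := by
      rw [div_le_iff₀ hγa] at hN
      push_cast
      nlinarith
    calc (k : ℝ≥0∞) = ENNReal.ofReal (k : ℝ) := (ENNReal.ofReal_natCast k).symm
      _ ≤ ENNReal.ofReal (γ a.toReal * ((N + 1 : ℕ) : ℝ)) := ENNReal.ofReal_le_ofReal hreal
      _ = ENNReal.ofReal (γ a.toReal) * ((N + 1 : ℕ) : ℝ≥0∞) := by
          rw [ENNReal.ofReal_mul hγa.le, ENNReal.ofReal_natCast]
      _ ≤ _ := mul_le_mul' (ENNReal.ofReal_le_ofReal hγle) (hE3 x hx)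
  choose E hEm hEpos hEle hEk using key
  refine ⟨⋃ k, E k, MeasurableSet.iUnion hEm, (hEpos 0).trans_le (measure_mono (subset_iUnion E 0)),
    ?_, ?_, E, fun k => ⟨hEm k, hEpos k⟩, ?_, fun k _ => hEk k⟩
  · calc μ (⋃ k, E k) ≤ ∑' k, μ (E k) := measure_iUnion_le _
      _ ≤ ∑' k, (2⁻¹ : ℝ≥0∞) ^ k := ENNReal.tsum_le_tsum hEle
      _ = 2 := by rw [ENNReal.tsum_geometric, ENNReal.one_sub_inv_two, inv_inv]
      _ < ∞ := by simp
  · intro htight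
    obtain ⟨t, ht⟩ := htight (1 / 2) (by norm_num)
    obtain ⟨k, hk⟩ := exists_nat_gt (max t 0)
    have hsub : E k ⊆ {x | ENNReal.ofReal t <
        ENNReal.ofReal (γ (μ (E k)).toReal) * phiRT T (E k) x} := by
      intro x hx
      refine lt_of_lt_of_le ?_ (hEk k x hx)
      rw [← ENNReal.ofReal_natCast k]
      exact (ENNReal.ofReal_lt_ofReal_iff ((le_max_right _ _).trans_lt hk)).2
        ((le_max_left _ _).trans_lt hk)
    have h := ht (E k) (subset_iUnion E k) (hEm k) (hEpos k)
    have hfin : μ (E k) ≠ ∞ :=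
      ((hEle k).trans_lt (ENNReal.pow_lt_top (by simp))).ne
    rw [condProb, inter_eq_left.2 hsub, ENNReal.div_self (hEpos k).ne' hfin] at h
    norm_num at h
  · exact tendsto_of_tendsto_of_tendsto_of_le_of_le tendsto_const_nhds
      (ENNReal.tendsto_pow_atTop_nhds_zero_of_lt_one (by simp))
      (fun _ => zero_le) hEle
end
end
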